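/- The linear span in Q[S_n] of the elements E_i (the sum of all permutations of [n] with exactly i-1 descents, for i = 1,...,n) is a commutative subalgebra of Q[S_n] of dimension n. -/

import Mathlib

open scoped Classical

noncomputable section

/-- The value of `π` at the 1-based position `i`, with the convention
`π(0) = π(n+1) = 0` and values in `{1, …, n}`. -/
def pval {n : ℕ} (π : Equiv.Perm (Fin n)) (i : ℕ) : ℕ :=
  if h : 1 ≤ i ∧ i ≤ n then ((π ⟨i - 1, by omega⟩ : Fin n) : ℕ) + 1 else 0

/-- The descent set of `π`: positions `1 ≤ s ≤ n-1` with `π(s) > π(s+1)`. -/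
def desSet {n : ℕ} (π : Equiv.Perm (Fin n)) : Finset ℕ :=
  (Finset.Ico 1 n).filter fun s => pval π (s + 1) < pval π s

/-- The descent number of `π`. -/
def des {n : ℕ} (π : Equiv.Perm (Fin n)) : ℕ := (desSet π).card

theorem aux_mem_des {m : ℕ} (π : Equiv.Perm (Fin (m+1))) (i : Fin m) :
    (i : ℕ) + 1 ∈ desSet π ↔ π i.succ < π i.castSucc := by
  have hi := i.isLt
  have h1 : pval π ((i : ℕ) + 1 + 1) = (π i.succ : ℕ) + 1 := by
    unfold pval
    rw [dif_pos (by omega)]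
    congr 2
  have h2 : pval π ((i : ℕ) + 1) = (π i.castSucc : ℕ) + 1 := by
    unfold pval
    rw [dif_pos (by omega)]
    congr 2
  unfold desSet
  rw [Finset.mem_filter, h1, h2, Finset.mem_Ico, Fin.lt_def]
  omega

/-- Number of descents at position at most `s`. -/
def auxD {n : ℕ} (π : Equiv.Perm (Fin n)) (s : ℕ) : ℕ := ((desSet π).filter (· ≤ s)).card

theorem auxD_zero {n : ℕ} (π : Equiv.Perm (Fin n)) : auxD π 0 = 0 := by
  unfold auxD
  rw [Finset.card_eq_zero, Finset.filter_eq_empty_iff]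
  intro x hx
  simp only [desSet, Finset.mem_filter, Finset.mem_Ico] at hx
  omega

theorem auxD_last {m : ℕ} (π : Equiv.Perm (Fin (m+1))) : auxD π m = des π := by
  unfold auxD des
  rw [Finset.filter_true_of_mem]
  intro x hx
  simp only [desSet, Finset.mem_filter, Finset.mem_Ico] at hx
  omega

theorem auxD_succ {n : ℕ} (π : Equiv.Perm (Fin n)) (s : ℕ) :
    auxD π (s+1) = auxD π s + if s + 1 ∈ desSet π then 1 else 0 := by
  unfold auxD
  have h : (desSet π).filter (· ≤ s+1) = (desSet π).filter (· ≤ s) ∪ (desSet π).filter (· = s+1) := by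
    ext x; simp only [Finset.mem_filter, Finset.mem_union]; constructor
    · rintro ⟨h1, h2⟩
      by_cases h : x = s+1
      · right; exact ⟨h1, h⟩
      · left; exact ⟨h1, by omega⟩
    · rintro (⟨h1, h2⟩ | ⟨h1, h2⟩) <;> exact ⟨h1, by omega⟩
  rw [h, Finset.card_union_of_disjoint, Finset.filter_eq']
  · split_ifs <;> simp
  · rw [Finset.disjoint_left]
    intro x hx hy
    simp only [Finset.mem_filter] at hx hy
    omega

theorem aux_sort_iff {m : ℕ} (π : Equiv.Perm (Fin (m+1))) (g : Fin (m+1) → ℕ) :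
    π = Tuple.sort g ↔ Monotone (fun s : Fin (m+1) => (g (π s) : ℤ) - auxD π s) := by
  have h1 : π = Tuple.sort g ↔ StrictMono (fun s => toLex (g (π s), π s)) := by
    rw [Tuple.eq_sort_iff]
    constructor
    · rintro ⟨h1, h2⟩ i j hij
      rw [Prod.Lex.toLex_lt_toLex]
      rcases (h1 hij.le).lt_or_eq with h | h
      · left; exact h
      · right; exact ⟨h, h2 i j hij h⟩
    · intro h
      refine ⟨fun i j hij => ?_, fun i j hij he => ?_⟩
      · have := h.monotone hij
        rw [Prod.Lex.toLex_le_toLex] at this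
        rcases this with h | h
        · exact le_of_lt h
        · exact h.1.le
      · have := h hij
        rw [Prod.Lex.toLex_lt_toLex] at this
        rcases this with h | h
        · exact absurd he (ne_of_lt h)
        · exact h.2
  rw [h1, Fin.strictMono_iff_lt_succ, Fin.monotone_iff_le_succ]
  refine forall_congr' fun i => ?_
  rw [Prod.Lex.toLex_lt_toLex]
  simp only [Fin.val_succ, Fin.val_castSucc, auxD_succ, aux_mem_des]
  have hne : π i.castSucc ≠ π i.succ := by
    intro h
    have := π.injective h
    simp [Fin.ext_iff] at this
  split_ifs with h
  · have := not_lt.2 h.le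
    push_cast
    simp only [this, and_false, or_false]
    omega
  · have : π i.castSucc < π i.succ := lt_of_le_of_ne (not_lt.1 h) hne
    simp only [this, and_true]
    push_cast
    omega

/-- All functions `Fin n → {0, …, k-1}`. -/
def auxF (n k : ℕ) : Finset (Fin n → ℕ) := Fintype.piFinset fun _ => Finset.range k

theorem mem_auxF {n k : ℕ} {g : Fin n → ℕ} : g ∈ auxF n k ↔ ∀ i, g i < k := by
  simp [auxF]

/-- The coefficient. -/
def auxc (n k d : ℕ) : ℕ := ((auxF n k).filter fun f => Monotone f ∧ ∀ s, f s + d < k).card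

theorem auxc_eq {m : ℕ} (k : ℕ) (π : Equiv.Perm (Fin (m+1))) :
    ((auxF (m+1) k).filter fun g => Tuple.sort g = π).card = auxc (m+1) k (des π) := by
  unfold auxc
  have key : ∀ g : Fin (m+1) → ℕ, Tuple.sort g = π → ∀ s : Fin (m+1), auxD π s ≤ g (π s) := by
    intro g hg s
    have := (aux_sort_iff π g).1 hg.symm (Fin.zero_le s)
    simp [auxD_zero] at this
    omega
  refine Finset.card_nbij' (fun g s => g (π s) - auxD π s)
    (fun f i => f (π.symm i) + auxD π (π.symm i)) ?_ ?_ ?_ ?_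
  · intro g hg
    simp only [Finset.coe_filter, Set.mem_ofPred_eq, mem_auxF] at hg ⊢
    obtain ⟨hk, hs⟩ := hg
    have hm := (aux_sort_iff π g).1 hs.symm
    have key := key g hs
    refine ⟨fun i => ?_, fun i j hij => ?_, fun s => ?_⟩
    · have := hk (π i); omega
    · have := hm hij
      have := key i
      have := key j
      simp only at *
      omega
    · have := hm (Fin.le_last s)
      have h1 := key s
      have h2 := key (Fin.last m)
      have h3 := hk (π (Fin.last m))
      simp only [Fin.val_last, auxD_last] at *
      omega
  · intro f hf
    simp only [Finset.coe_filter, Set.mem_ofPred_eq, mem_auxF] at hf ⊢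
    obtain ⟨hk, hm, hd⟩ := hf
    constructor
    · intro i
      have := hd (π.symm i)
      have : auxD π (π.symm i) ≤ des π := Finset.card_le_card (Finset.filter_subset _ _)
      omega
    · symm
      rw [aux_sort_iff]
      intro i j hij
      have := hm hij
      simp
      exact this
  · intro g hg
    simp only [Finset.coe_filter, Set.mem_ofPred_eq, mem_auxF] at hg
    have key := key g hg.2
    funext i
    have := key (π.symm i)
    simp only [Equiv.apply_symm_apply] at this ⊢
    omega
  · intro f hf
    funext i
    simp

theorem auxc_zero {m k d : ℕ} (h : k ≤ d) : auxc (m+1) k d = 0 := by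
  unfold auxc
  rw [Finset.card_eq_zero, Finset.filter_eq_empty_iff]
  rintro f _ ⟨_, h2⟩
  have := h2 0
  omega

theorem auxc_one {m d : ℕ} : auxc (m+1) (d+1) d = 1 := by
  unfold auxc
  rw [Finset.card_eq_one]
  refine ⟨0, ?_⟩
  ext f
  simp only [Finset.mem_filter, mem_auxF, Finset.mem_singleton]
  constructor
  · rintro ⟨_, _, h⟩
    funext i
    have := h i
    simp; omega
  · rintro rfl
    refine ⟨by simp, fun _ _ _ => by simp, by simp⟩

/-- The elements `φ(k)`. -/
def auxPhi (n k : ℕ) : MonoidAlgebra ℚ (Equiv.Perm (Fin n)) :=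
  ∑ g ∈ auxF n k, MonoidAlgebra.of ℚ (Equiv.Perm (Fin n)) (Tuple.sort g)

theorem aux_sort_mul {n k : ℕ} (g h : Fin n → ℕ) (hg : ∀ i, g i < k) :
    Tuple.sort g * Tuple.sort h =
      Tuple.sort (fun j => k * h ((Tuple.sort g).symm j) + g j) := by
  have e1 := (Tuple.eq_sort_iff (f := g) (σ := Tuple.sort g)).1 rfl
  have e2 := (Tuple.eq_sort_iff (f := h) (σ := Tuple.sort h)).1 rfl
  generalize Tuple.sort g = σ at *
  generalize Tuple.sort h = τ at *
  rw [Tuple.eq_sort_iff]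
  obtain ⟨m1, t1⟩ := e1
  obtain ⟨m2, t2⟩ := e2
  constructor
  · intro i j hij
    simp only [Function.comp, Equiv.Perm.mul_apply, Equiv.symm_apply_apply]
    rcases hij.eq_or_lt with rfl | hij
    · exact le_rfl
    rcases (m2 hij.le).lt_or_eq with hh | hh
    · simp only [Function.comp] at hh
      have := hg (σ (τ i))
      nlinarith
    · have := m1 (t2 i j hij hh).le
      simp only [Function.comp] at hh this
      rw [hh]; omega
  · intro i j hij he
    simp only [Equiv.Perm.mul_apply, Equiv.symm_apply_apply] at he ⊢
    have hh : h (τ i) = h (τ j) := by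
      have h1 := hg (σ (τ i))
      have h2 := hg (σ (τ j))
      rcases lt_trichotomy (h (τ i)) (h (τ j)) with hl | hl | hl
      · nlinarith
      · exact hl
      · nlinarith
    rw [hh] at he
    exact t1 _ _ (t2 i j hij hh) (by omega)

theorem auxPhi_mul (n k l : ℕ) : auxPhi n k * auxPhi n l = auxPhi n (k * l) := by
  unfold auxPhi
  rw [Finset.sum_mul_sum, ← Finset.sum_product']
  refine Finset.sum_nbij' (fun p j => k * p.2 ((Tuple.sort p.1).symm j) + p.1 j)
    (fun G => (fun j => G j % k, fun i => G (Tuple.sort (fun j => G j % k) i) / k)) ?_ ?_ ?_ ?_ ?_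
  · rintro ⟨g, h⟩ hp
    simp only [Finset.mem_product, mem_auxF] at hp ⊢
    intro i
    have h1 := hp.1 i
    have h2 := hp.2 ((Tuple.sort g).symm i)
    nlinarith
  · intro G hG
    simp only [Finset.mem_product, mem_auxF] at hG ⊢
    constructor
    · intro i
      have := hG i
      apply Nat.mod_lt
      by_contra h0
      have : k = 0 := by omega
      subst this
      simp at *
    · intro i
      exact Nat.div_lt_of_lt_mul (hG _)
  · rintro ⟨g, h⟩ hp
    simp only [Finset.mem_product, mem_auxF] at hp
    have e : (fun j => (k * h ((Tuple.sort g).symm j) + g j) % k) = g := by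
      funext j
      rw [Nat.mul_add_mod, Nat.mod_eq_of_lt (hp.1 j)]
    simp only [e, Equiv.symm_apply_apply, Prod.mk.injEq, true_and]
    funext i
    have := hp.1 (Tuple.sort g i)
    rw [Nat.mul_add_div (by omega), Nat.div_eq_of_lt this, add_zero]
  · intro G hG
    funext j
    simp [Nat.div_add_mod]
  · rintro ⟨g, h⟩ hp
    simp only [Finset.mem_product, mem_auxF] at hp
    rw [← aux_sort_mul g h hp.1, map_mul]

/-- The Eulerian elements. -/
def auxE (n i : ℕ) : MonoidAlgebra ℚ (Equiv.Perm (Fin n)) :=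
  ∑ π ∈ Finset.univ.filter (fun π : Equiv.Perm (Fin n) => des π = i - 1),
        MonoidAlgebra.of ℚ (Equiv.Perm (Fin n)) π

theorem des_le {m : ℕ} (π : Equiv.Perm (Fin (m+1))) : des π ≤ m := by
  unfold des desSet
  refine (Finset.card_filter_le _ _).trans ?_
  simp

theorem auxPhi_eq (m k : ℕ) :
    auxPhi (m+1) k = ∑ d ∈ Finset.range (m+1), (auxc (m+1) k d : ℚ) • auxE (m+1) (d+1) := by
  have h1 : auxPhi (m+1) k = ∑ π : Equiv.Perm (Fin (m+1)),
      (auxc (m+1) k (des π) : ℚ) • MonoidAlgebra.of ℚ (Equiv.Perm (Fin (m+1))) π := by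
    unfold auxPhi
    rw [← Finset.sum_fiberwise (auxF (m+1) k) Tuple.sort]
    refine Finset.sum_congr rfl fun π _ => ?_
    rw [← auxc_eq, Nat.cast_smul_eq_nsmul, ← Finset.sum_const]
    refine Finset.sum_congr rfl fun g hg => ?_
    rw [(Finset.mem_filter.1 hg).2]
  rw [h1, ← Finset.sum_fiberwise_of_maps_to (g := des) (t := Finset.range (m+1))
    (fun π _ => by have := des_le π; simp; omega)]
  refine Finset.sum_congr rfl fun d _ => ?_
  unfold auxE
  rw [Finset.smul_sum]
  refine Finset.sum_congr rfl fun π hπ => ?_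
  rw [(Finset.mem_filter.1 hπ).2, Nat.add_sub_cancel]

theorem auxE_mem (m d : ℕ) (hd : d < m + 1) :
    auxE (m+1) (d+1) ∈ Submodule.span ℚ (Set.range (auxPhi (m+1))) := by
  induction d using Nat.strong_induction_on with
  | _ d ih =>
    have h := auxPhi_eq m (d+1)
    have h2 : auxPhi (m+1) (d+1) = ∑ e ∈ Finset.range (d+1),
        (auxc (m+1) (d+1) e : ℚ) • auxE (m+1) (e+1) := by
      rw [h]
      symm
      apply Finset.sum_subset
      · intro x hx; simp at *; omega
      · intro x _ hx
        rw [auxc_zero (by simpa using hx)]; simp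
    rw [Finset.sum_range_succ, auxc_one, Nat.cast_one, one_smul] at h2
    rw [← sub_eq_iff_eq_add'.2 h2]
    refine Submodule.sub_mem _ (Submodule.subset_span ⟨_, rfl⟩) (Submodule.sum_mem _ fun e he => ?_)
    have he : e < d := by simpa using he
    exact Submodule.smul_mem _ _ (ih e he (by omega))

theorem aux_span (m : ℕ) : Submodule.span ℚ (auxE (m+1) '' Set.Icc 1 (m+1)) =
    Submodule.span ℚ (Set.range (auxPhi (m+1))) := by
  apply le_antisymm
  · rw [Submodule.span_le]
    rintro _ ⟨i, hi, rfl⟩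
    obtain ⟨d, rfl⟩ : ∃ d, i = d + 1 := ⟨i - 1, by have := hi.1; omega⟩
    exact auxE_mem m d (by have := hi.2; omega)
  · rw [Submodule.span_le]
    rintro _ ⟨k, rfl⟩
    rw [auxPhi_eq]
    refine Submodule.sum_mem _ fun e he => Submodule.smul_mem _ _ (Submodule.subset_span ⟨e+1, ?_, rfl⟩)
    simp at he ⊢; omega

theorem aux_exists (m d : ℕ) (hd : d < m + 1) : ∃ π : Equiv.Perm (Fin (m+1)), des π = d := by
  let f : Fin (m+1) → Fin (m+1) := fun i =>
    if h : (i : ℕ) ≤ d then ⟨d - i, by omega⟩ else i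
  have hf : Function.Involutive f := by
    intro i
    by_cases h : (i : ℕ) ≤ d
    · simp only [f, h, dif_pos, Fin.ext_iff]
      rw [dif_pos (by omega)]
      simp only
      omega
    · simp [f, h]
  refine ⟨hf.toPerm, ?_⟩
  have : desSet hf.toPerm = Finset.Icc 1 d := by
    ext s
    by_cases hs : 1 ≤ s ∧ s ≤ m
    · obtain ⟨i, rfl⟩ : ∃ i : Fin m, s = i + 1 := ⟨⟨s - 1, by omega⟩, by simp; omega⟩
      rw [aux_mem_des, Finset.mem_Icc, Fin.lt_def]
      simp only [Function.Involutive.coe_toPerm, f, Fin.val_succ, Fin.val_castSucc]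
      split_ifs <;> simp <;> omega
    · simp only [desSet, Finset.mem_filter, Finset.mem_Ico, Finset.mem_Icc]
      constructor
      · intro h; omega
      · intro h; omega
  rw [des, this]; simp

theorem auxE_apply (n i : ℕ) (π : Equiv.Perm (Fin n)) :
    (MonoidAlgebra.coeff (auxE n i)) π = if des π = i - 1 then 1 else 0 := by
  unfold auxE
  simp [MonoidAlgebra.of_apply, Finsupp.single_apply, Finsupp.finsetSum_apply]

theorem auxE_indep (m : ℕ) :
    LinearIndependent ℚ (fun d : Fin (m+1) => auxE (m+1) (d+1)) := by
  rw [Fintype.linearIndependent_iff]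
  intro c hc e
  obtain ⟨π, hπ⟩ := aux_exists m e e.isLt
  have := congrArg (fun a => (MonoidAlgebra.coeff a) π) hc
  simp [auxE_apply, Finsupp.finsetSum_apply, hπ, Fin.val_inj] at this
  exact this

theorem aux_finrank (m : ℕ) :
    Module.finrank ℚ (Submodule.span ℚ (auxE (m+1) '' Set.Icc 1 (m+1))) = m+1 := by
  have : auxE (m+1) '' Set.Icc 1 (m+1) = Set.range (fun d : Fin (m+1) => auxE (m+1) (d+1)) := by
    ext x
    constructor
    · rintro ⟨i, hi, rfl⟩
      exact ⟨⟨i - 1, by have := hi.2; have := hi.1; omega⟩, by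
        have := hi.1
        simp only
        congr 1; omega⟩
    · rintro ⟨d, rfl⟩
      exact ⟨d+1, by simp; omega, rfl⟩
  rw [this, finrank_span_eq_card (auxE_indep m), Fintype.card_fin]

theorem aux_comm (m : ℕ) (a b : MonoidAlgebra ℚ (Equiv.Perm (Fin (m+1))))
    (ha : a ∈ Submodule.span ℚ (Set.range (auxPhi (m+1))))
    (hb : b ∈ Submodule.span ℚ (Set.range (auxPhi (m+1)))) :
    a * b ∈ Submodule.span ℚ (Set.range (auxPhi (m+1))) ∧ a * b = b * a := by
  induction ha, hb using Submodule.span_induction₂ with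
  | mem_mem x y hx hy =>
    obtain ⟨k, rfl⟩ := hx
    obtain ⟨l, rfl⟩ := hy
    rw [auxPhi_mul, auxPhi_mul, mul_comm l k]
    exact ⟨Submodule.subset_span ⟨_, rfl⟩, rfl⟩
  | zero_left y hy => simp
  | zero_right y hy => simp
  | add_left x y z hx hy hz h1 h2 =>
    rw [add_mul, mul_add]
    exact ⟨Submodule.add_mem _ h1.1 h2.1, by rw [h1.2, h2.2]⟩
  | add_right x y z hx hy hz h1 h2 =>
    rw [add_mul, mul_add]
    exact ⟨Submodule.add_mem _ h1.1 h2.1, by rw [h1.2, h2.2]⟩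
  | smul_left r x y hx hy h =>
    rw [smul_mul_assoc, mul_smul_comm]
    exact ⟨Submodule.smul_mem _ _ h.1, by rw [h.2]⟩
  | smul_right r x y hx hy h =>
    rw [smul_mul_assoc, mul_smul_comm]
    exact ⟨Submodule.smul_mem _ _ h.1, by rw [h.2]⟩

theorem stmt3 (n : ℕ) :
    let E : ℕ → MonoidAlgebra ℚ (Equiv.Perm (Fin n)) := fun i =>
      ∑ π ∈ Finset.univ.filter (fun π : Equiv.Perm (Fin n) => des π = i - 1),
        MonoidAlgebra.of ℚ (Equiv.Perm (Fin n)) π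
    let S : Submodule ℚ (MonoidAlgebra ℚ (Equiv.Perm (Fin n))) :=
      Submodule.span ℚ (E '' Set.Icc 1 n)
    (∀ a ∈ S, ∀ b ∈ S, a * b ∈ S ∧ a * b = b * a) ∧ Module.finrank ℚ ↥S = n := by
  intro E S
  have hS : S = Submodule.span ℚ (auxE n '' Set.Icc 1 n) := rfl
  clear_value S
  subst hS
  cases n with
  | zero =>
    simp
  | succ m =>
    refine ⟨?_, aux_finrank m⟩
    rw [aux_span]
    intro a ha b hb
    exact aux_comm m a b ha hb
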